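/- A ring R is a uniquely clean ring if and only if R is a √J-clean ring in which every idempotent is central. -/

import Mathlib

/-- `√J(R)`: the set of elements some positive power of which lies in the
Jacobson radical `J(R)` of the ring `R`. -/
def sqrtJ (R : Type*) [Ring R] : Set R :=
  {z : R | ∃ n : ℕ, 1 ≤ n ∧ z ^ n ∈ (⊥ : TwoSidedIdeal R).jacobson}

/-- `R` is a `√J`-clean ring: every element is the sum of an idempotent and an
element of `√J(R)`. -/
def IsSqrtJCleanRing (R : Type*) [Ring R] : Prop :=
  ∀ a : R, ∃ e z : R, IsIdempotentElem e ∧ z ∈ sqrtJ R ∧ a = e + z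

/-- `R` is a strongly `√J`-clean ring: every element is the sum of an idempotent
and an element of `√J(R)` that commute with each other. -/
def IsStronglySqrtJCleanRing (R : Type*) [Ring R] : Prop :=
  ∀ a : R, ∃ e z : R, IsIdempotentElem e ∧ z ∈ sqrtJ R ∧ a = e + z ∧ e * z = z * e

/-- `R` is a uniquely `√J`-clean ring: every element is uniquely the sum of an
idempotent and an element of `√J(R)`. -/
def IsUniquelySqrtJCleanRing (R : Type*) [Ring R] : Prop :=
  ∀ a : R, ∃! p : R × R, IsIdempotentElem p.1 ∧ p.2 ∈ sqrtJ R ∧ a = p.1 + p.2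

/-- `R` is a uniquely clean ring: every element is uniquely the sum of an
idempotent and a unit. -/
def IsUniquelyCleanRing (R : Type*) [Ring R] : Prop :=
  ∀ a : R, ∃! p : R × R, IsIdempotentElem p.1 ∧ IsUnit p.2 ∧ a = p.1 + p.2

theorem aux_mem_J {R : Type*} [Ring R] {x : R} :
    x ∈ (⊥ : TwoSidedIdeal R).jacobson ↔ ∀ y, ∃ z, z * (y * x + 1) = 1 := by
  rw [TwoSidedIdeal.mem_jacobson_iff]
  refine forall_congr' fun y => exists_congr fun z => ?_
  rw [TwoSidedIdeal.mem_bot, sub_eq_zero, mul_add, mul_one, mul_assoc]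

theorem aux_unit_J {R : Type*} [Ring R] {x : R}
    (hx : x ∈ (⊥ : TwoSidedIdeal R).jacobson) : IsUnit (1 + x) := by
  obtain ⟨z, hz⟩ := aux_mem_J.1 hx 1
  obtain ⟨t, ht⟩ := aux_mem_J.1 hx (-z)
  have h1 : z * (1 + x) = 1 := by rw [one_mul, add_comm] at hz; exact hz
  have h2 : -z * x + 1 = z := by
    have : z + z * x = 1 := by rw [← h1]; noncomm_ring
    rw [← this]; noncomm_ring
  rw [h2] at ht
  have h3 : t = 1 + x := by
    calc t = t * (z * (1 + x)) := by rw [h1, mul_one]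
      _ = (t * z) * (1 + x) := by rw [mul_assoc]
      _ = 1 + x := by rw [ht, one_mul]
  rw [h3] at ht
  exact ⟨⟨1 + x, z, ht, h1⟩, rfl⟩

theorem aux_unit_sqrtJ {R : Type*} [Ring R] {z : R} (hz : z ∈ sqrtJ R) : IsUnit (1 - z) := by
  obtain ⟨n, hn, h⟩ := hz
  have h1 : IsUnit (1 - z ^ n) := by
    have := aux_unit_J (TwoSidedIdeal.neg_mem _ h)
    rwa [← sub_eq_add_neg] at this
  have hc : (1 - z) * (∑ i ∈ Finset.range n, z ^ i) = 1 - z ^ n := mul_neg_geom_sum z n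
  have hc2 : (∑ i ∈ Finset.range n, z ^ i) * (1 - z) = 1 - z ^ n := geom_sum_mul_neg z n
  have hcm : Commute (1 - z) (∑ i ∈ Finset.range n, z ^ i) := hc.trans hc2.symm
  rw [← hc] at h1
  exact (hcm.isUnit_mul_iff.1 h1).1

theorem aux_mul_sqrtJ {R : Type*} [Ring R] {w z : R} (hz : z ∈ sqrtJ R) (h : Commute w z) :
    w * z ∈ sqrtJ R := by
  obtain ⟨n, hn, hz⟩ := hz
  exact ⟨n, hn, by rw [h.mul_pow]; exact TwoSidedIdeal.mul_mem_left _ _ _ hz⟩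

theorem aux_idem_J {R : Type*} [Ring R] {g : R} (hg : IsIdempotentElem g)
    (h : g ∈ (⊥ : TwoSidedIdeal R).jacobson) : g = 0 := by
  have h1 := aux_unit_J (TwoSidedIdeal.neg_mem _ h)
  have h2 : (1 + -g) * g = 0 := by rw [add_mul, neg_mul, hg.eq]; simp
  exact (h1.mul_right_eq_zero).1 h2

theorem aux_unit_form {R : Type*} [Ring R] (hR : IsSqrtJCleanRing R)
    (hc : ∀ e : R, IsIdempotentElem e → ∀ x : R, e * x = x * e) {u : R} (hu : IsUnit u) :
    ∃ z ∈ sqrtJ R, u = 1 + z := by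
  obtain ⟨h, z, hh, hz, e⟩ := hR u
  obtain ⟨u, rfl⟩ := hu
  have hcomm : Commute (u : R) z := by
    have : z = u - h := by rw [e]; simp
    rw [this]
    exact (Commute.refl _).sub_right (hc h hh _).symm
  have h1 := aux_unit_sqrtJ (aux_mul_sqrtJ hz hcomm.units_inv_left)
  have h2 : h = u * (1 - ↑u⁻¹ * z) := by
    rw [mul_sub, Units.mul_inv_cancel_left, mul_one, e]; simp
  have h3 : IsUnit h := by rw [h2]; exact u.isUnit.mul h1
  have h4 : h = 1 := h3.mul_left_cancel (by rw [hh.eq, mul_one])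
  exact ⟨z, hz, by rw [e, h4]⟩

theorem aux_uniq {R : Type*} [Ring R] (hR : IsSqrtJCleanRing R)
    (hc : ∀ e : R, IsIdempotentElem e → ∀ x : R, e * x = x * e) {e f u v : R}
    (he : IsIdempotentElem e) (hf : IsIdempotentElem f) (hu : IsUnit u) (hv : IsUnit v)
    (h : e + u = f + v) : e * (1 - f) = 0 := by
  have hg : IsIdempotentElem (e * (1 - f)) :=
    he.mul_of_commute (hc e he _) hf.one_sub
  have hfg : (e * (1 - f)) * f = 0 := by rw [mul_assoc, sub_mul, one_mul, hf.eq]; simp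
  have heg : (e * (1 - f)) * e = e * (1 - f) := by
    rw [← hc e he, ← mul_assoc, he.eq]
  generalize e * (1 - f) = g at *
  obtain ⟨z, hz, rfl⟩ := aux_unit_form hR hc hv
  obtain ⟨n, hn, hz⟩ := hz
  have h1 : g * z = g * u := by
    have := congrArg (g * ·) h
    simp only [mul_add, heg, hfg, mul_one, zero_add] at this
    exact (add_left_cancel this).symm
  have h2 : (g * z) ^ n = (g * u) ^ n := by rw [h1]
  have h3 : g ^ n = g := by
    obtain ⟨m, rfl⟩ := Nat.exists_eq_add_of_le hn
    rw [add_comm]; exact hg.pow_succ_eq m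
  rw [(show Commute g z from hc g hg z).mul_pow, (show Commute g u from hc g hg u).mul_pow,
    h3] at h2
  have h4 : g * u ^ n ∈ (⊥ : TwoSidedIdeal R).jacobson := by
    rw [← h2]; exact TwoSidedIdeal.mul_mem_left _ _ _ hz
  obtain ⟨w, hw⟩ := hu.pow n
  rw [← hw] at h4
  have h5 := TwoSidedIdeal.mul_mem_right _ _ (↑w⁻¹ : R) h4
  rw [Units.mul_inv_cancel_right] at h5
  exact aux_idem_J hg h5

theorem aux_back {R : Type*} [Ring R] (hR : IsSqrtJCleanRing R)
    (hc : ∀ e : R, IsIdempotentElem e → ∀ x : R, e * x = x * e) : IsUniquelyCleanRing R := by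
  intro a
  obtain ⟨e, z, he, hz, rfl⟩ := hR a
  have hk : (1 - 2 * e) * (1 - 2 * e) = 1 := by
    have : (1 - 2 * e) * (1 - 2 * e) = 1 - 4 * e + 4 * (e * e) := by noncomm_ring
    rw [this, he.eq]; noncomm_ring
  have hcm : Commute (1 - 2 * e) z := by
    have : Commute e z := hc e he z
    exact (Commute.one_left z).sub_left ((Commute.ofNat_left 2 z).mul_left this)
  have hu : IsUnit (2 * e - 1 + z) := by
    have h1 := aux_unit_sqrtJ (aux_mul_sqrtJ hz hcm)
    have h2 : IsUnit (1 - 2 * e) := ⟨⟨_, _, hk, hk⟩, rfl⟩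
    have h3 : 2 * e - 1 + z = -((1 - 2 * e) * (1 - (1 - 2 * e) * z)) := by
      rw [mul_sub, ← mul_assoc, hk]; noncomm_ring
    rw [h3]; exact (h2.mul h1).neg
  refine ⟨(1 - e, 2 * e - 1 + z), ⟨he.one_sub, hu, by noncomm_ring⟩, ?_⟩
  rintro ⟨f, v⟩ ⟨hf, hv, h⟩
  simp only at hf hv h
  have h0 : (1 - e) + (2 * e - 1 + z) = f + v := by rw [← h]; noncomm_ring
  have h1 := aux_uniq hR hc he.one_sub hf hu hv h0
  have h2 := aux_uniq hR hc hf he.one_sub hv hu h0.symm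
  rw [mul_sub, mul_one, sub_eq_zero] at h1 h2
  have h3 : f = 1 - e := h2.trans ((hc f hf _).trans h1.symm)
  subst h3
  exact Prod.ext rfl (add_left_cancel h0).symm

theorem aux_uc {R : Type*} [Ring R] (hR : IsUniquelyCleanRing R) {e f u v : R}
    (he : IsIdempotentElem e) (hf : IsIdempotentElem f) (hu : IsUnit u) (hv : IsUnit v)
    (h : e + u = f + v) : e = f :=
  congrArg Prod.fst ((hR (e + u)).unique (y₁ := (e, u)) (y₂ := (f, v)) ⟨he, hu, rfl⟩ ⟨hf, hv, h⟩)

theorem aux_nil {R : Type*} [Ring R] (hR : IsUniquelyCleanRing R) {e n : R}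
    (he : IsIdempotentElem e) (hn : n * n = 0) (hen : e * n + n * e = n) : n = 0 := by
  have hf : IsIdempotentElem (e + n) := by
    unfold IsIdempotentElem
    have : (e + n) * (e + n) = e * e + (e * n + n * e) + n * n := by noncomm_ring
    rw [this, he.eq, hen, hn, add_zero]
  have hu : IsUnit (1 + n) := by
    refine ⟨⟨1 + n, 1 - n, ?_, ?_⟩, rfl⟩
    · have : (1 + n) * (1 - n) = 1 - n * n := by noncomm_ring
      rw [this, hn, sub_zero]
    · have : (1 - n) * (1 + n) = 1 - n * n := by noncomm_ring
      rw [this, hn, sub_zero]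
  have := aux_uc hR he hf hu isUnit_one (by abel)
  simpa using this

theorem aux_central {R : Type*} [Ring R] (hR : IsUniquelyCleanRing R) {e : R}
    (he : IsIdempotentElem e) (x : R) : e * x = x * e := by
  have h0 : (1 - e) * e = 0 := by rw [sub_mul, he.eq]; simp
  have h0' : e * (1 - e) = 0 := by rw [mul_sub, he.eq]; simp
  have h1 : e * x * (1 - e) = 0 := by
    apply aux_nil hR he
    · rw [show e * x * (1 - e) * (e * x * (1 - e)) = e * x * ((1 - e) * e) * x * (1 - e) by
        simp only [mul_assoc], h0]; simp
    · rw [mul_assoc (e * x), h0, ← mul_assoc, ← mul_assoc, he.eq]; simp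
  have h2 : (1 - e) * x * e = 0 := by
    apply aux_nil hR he
    · rw [show (1 - e) * x * e * ((1 - e) * x * e) = (1 - e) * x * (e * (1 - e)) * x * e by
        simp only [mul_assoc], h0']; simp
    · rw [mul_assoc ((1 - e) * x), he.eq, ← mul_assoc, ← mul_assoc, h0']; simp
  rw [mul_sub, mul_one, sub_eq_zero] at h1
  rw [sub_mul, sub_mul, one_mul, sub_eq_zero] at h2
  rw [h1, h2]

theorem aux_cu {R : Type*} [Ring R] {g p q : R} (hg : IsIdempotentElem g)
    (hgc : ∀ x, g * x = x * g) (h1 : p * q = g) (h2 : q * p = g) (hp : g * p = p)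
    (hq : g * q = q) : IsUnit (q + (1 - g)) := by
  have hp' := (hgc p).symm.trans hp
  have hq' := (hgc q).symm.trans hq
  refine ⟨⟨_, p + (1 - g), ?_, ?_⟩, rfl⟩
  · have : (q + (1 - g)) * (p + (1 - g)) =
      q * p + q - q * g + p - g * p + 1 - g - g + g * g := by noncomm_ring
    rw [this, h2, hq', hp, hg.eq]; abel
  · have : (p + (1 - g)) * (q + (1 - g)) =
      p * q + p - p * g + q - g * q + 1 - g - g + g * g := by noncomm_ring
    rw [this, h1, hp', hq, hg.eq]; abel

theorem aux_unit_sub {R : Type*} [Ring R] (hR : IsUniquelyCleanRing R) {u : R} (hu : IsUnit u) :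
    u - 1 ∈ (⊥ : TwoSidedIdeal R).jacobson := by
  rw [aux_mem_J]
  intro y
  obtain ⟨⟨e, w⟩, ⟨he, hw, hew⟩, -⟩ := hR (-y * (u - 1))
  simp only at he hw hew
  obtain ⟨w, rfl⟩ := hw
  obtain ⟨u, rfl⟩ := hu
  have hg := he.one_sub
  have hge : (1 - e) * e = 0 := by rw [sub_mul, he.eq]; simp
  have hcz := @aux_central R _ hR
  obtain ⟨g, hgdef⟩ : ∃ g, g = 1 - e := ⟨_, rfl⟩
  rw [← hgdef] at hg hge
  have hgc := hcz hg
  have hga : g * (-y * (u - 1)) = g * w := by rw [hew, mul_add, hge, zero_add]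
  obtain ⟨p, hpd⟩ : ∃ p, p = g * (↑w⁻¹ * -y) := ⟨_, rfl⟩
  obtain ⟨q, hqd⟩ : ∃ q, q = g * ((u : R) - 1) := ⟨_, rfl⟩
  have hp : g * p = p := by rw [hpd, ← mul_assoc, hg.eq]
  have hq : g * q = q := by rw [hqd, ← mul_assoc, hg.eq]
  have hpq : p * q = g := by
    calc p * q = (g * p) * ((u : R) - 1) := by rw [hqd, ← mul_assoc, hgc p]
      _ = p * ((u : R) - 1) := by rw [hp]
      _ = ↑w⁻¹ * (g * (-y * (u - 1))) := by
        rw [hpd, ← mul_assoc, hgc]; simp only [mul_assoc]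
      _ = g := by rw [hga, hgc, Units.inv_mul_cancel_left]
  have hqp : q * p = g := by
    have hi : IsIdempotentElem (q * p) := by
      unfold IsIdempotentElem
      rw [show q * p * (q * p) = q * (p * q) * p by simp only [mul_assoc], hpq, mul_assoc, hp]
    calc q * p = q * p * g := by rw [← hgc, ← mul_assoc, hq]
      _ = q * p * (p * q) := by rw [hpq]
      _ = p * (q * p) * q := by rw [← mul_assoc, hcz hi p]
      _ = (p * q) * (p * q) := by simp only [mul_assoc]
      _ = g := by rw [hpq, hg.eq]
  have hv := aux_cu hg hgc hpq hqp hp hq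
  have hgu : ∀ s t : R, s * t = 1 → (g * s) * (g * t) = g := by
    intro s t hst
    rw [hgc s, mul_assoc, ← mul_assoc g, hg.eq, hgc t, ← mul_assoc, hst, one_mul]
  have hu' : IsUnit (g * (u : R) + (1 - g)) :=
    aux_cu (p := g * ↑u⁻¹) hg hgc (hgu _ _ (by simp)) (hgu _ _ (by simp))
      (by rw [← mul_assoc, hg.eq]) (by rw [← mul_assoc, hg.eq])
  have h0 : (0 : R) = g := aux_uc hR IsIdempotentElem.zero hg hu' hv (by rw [hqd]; noncomm_ring)
  have he1 : e = 1 := by rw [← h0] at hgdef; exact (sub_eq_zero.1 hgdef.symm).symm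
  refine ⟨-↑w⁻¹, ?_⟩
  have : y * ((u : R) - 1) + 1 = -w := by
    rw [he1, neg_mul] at hew
    rw [← neg_neg (y * ((u : R) - 1)), hew]; abel
  rw [this]; simp

theorem aux_fwd {R : Type*} [Ring R] (hR : IsUniquelyCleanRing R) : IsSqrtJCleanRing R := by
  intro a
  obtain ⟨⟨f, u⟩, ⟨hf, hu, h⟩, -⟩ := hR a
  simp only at hf hu h
  refine ⟨1 - f, 2 * f - 1 + u, hf.one_sub, ⟨1, le_rfl, ?_⟩, by rw [h]; noncomm_ring⟩
  have h1 := aux_unit_sub hR hu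
  have h2 := TwoSidedIdeal.mul_mem_right _ _ f (aux_unit_sub hR (isUnit_one (M := R)).neg)
  have := TwoSidedIdeal.sub_mem _ h1 h2
  rw [pow_one]
  convert this using 1
  noncomm_ring

theorem uniquelyClean_iff_sqrtJClean_central_idempotents (R : Type*) [Ring R] :
    IsUniquelyCleanRing R ↔
      (IsSqrtJCleanRing R ∧ ∀ e : R, IsIdempotentElem e → ∀ x : R, e * x = x * e) := by
  exact ⟨fun h => ⟨aux_fwd h, fun _ he x => aux_central h he x⟩, fun h => aux_back h.1 h.2⟩
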